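/- Suppose K ⊆ L are origin-symmetric star bodies in R^n and ε > 0 satisfies ε = min_{ξ ∈ S^{n-1}} (|L∩ξ^⊥| - |K∩ξ^⊥|) and |L|^{(n-1)/n} - |K|^{(n-1)/n} < c_{n,1}·ε. Then the function g_0 = χ_{L\K} satisfies ∫_L g_0 < (n/(n-1)) · c_{n,1} · |L|^{1/n} · min_{ξ ∈ S^{n-1}} ∫_{L∩ξ^⊥} g_0. -/

import Mathlib

open MeasureTheory Metric

noncomputable section

/-- Volume of the unit Euclidean ball in `ℝ^m`. -/
def unitBallVol (m : ℕ) : ℝ :=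
  (volume (ball (0 : EuclideanSpace ℝ (Fin m)) 1)).toReal

/-- The constant `c_{n,k} = |B_2^n|^{(n-k)/n} / |B_2^{n-k}|`. -/
def cnk (n k : ℕ) : ℝ :=
  unitBallVol n ^ (((n : ℝ) - k) / n) / unitBallVol (n - k)

/-- Minimal sections counterexample: if `K ⊆ L` are origin-symmetric star bodies,
`ε = min_ξ (|L∩ξ^⊥| - |K∩ξ^⊥|)` and `|L|^{(n-1)/n} - |K|^{(n-1)/n} < c_{n,1}ε`, then
`g_0 = χ_{L\K}` satisfies `∫_L g_0 < (n/(n-1)) c_{n,1} |L|^{1/n} min_ξ ∫_{L∩ξ^⊥} g_0`. -/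
theorem minimal_sections (n : ℕ) (hn : 2 ≤ n)
    (K L : Set (EuclideanSpace ℝ (Fin n))) (hKL : K ⊆ L)
    (hKcomp : IsCompact K) (hLcomp : IsCompact L)
    (hKsymm : ∀ x ∈ K, -x ∈ K) (hLsymm : ∀ x ∈ L, -x ∈ L)
    (hKstar : ∀ x ∈ K, ∀ t ∈ Set.Icc (0 : ℝ) 1, t • x ∈ K)
    (hLstar : ∀ x ∈ L, ∀ t ∈ Set.Icc (0 : ℝ) 1, t • x ∈ L)
    (hK0 : (0 : EuclideanSpace ℝ (Fin n)) ∈ interior K)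
    (hL0 : (0 : EuclideanSpace ℝ (Fin n)) ∈ interior L)
    (ε : ℝ) (hε : 0 < ε)
    (hmin : IsLeast {d : ℝ | ∃ ξ : EuclideanSpace ℝ (Fin n), ‖ξ‖ = 1 ∧
        d = (volume ((↑) ⁻¹' L : Set (ℝ ∙ ξ)ᗮ)).toReal
              - (volume ((↑) ⁻¹' K : Set (ℝ ∙ ξ)ᗮ)).toReal} ε)
    (hvol : (volume L).toReal ^ (((n : ℝ) - 1) / n)
        - (volume K).toReal ^ (((n : ℝ) - 1) / n) < cnk n 1 * ε) :
    (volume (L \ K)).toReal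
      < ((n : ℝ) / ((n : ℝ) - 1)) * cnk n 1 * (volume L).toReal ^ ((1 : ℝ) / n)
          * sInf {d : ℝ | ∃ ξ : EuclideanSpace ℝ (Fin n), ‖ξ‖ = 1 ∧
              d = (volume ((↑) ⁻¹' (L \ K) : Set (ℝ ∙ ξ)ᗮ)).toReal} := by
  have hn0 : (0 : ℝ) < n := by
    have : (2 : ℝ) ≤ n := by exact_mod_cast hn
    linarith
  have hn1 : (0 : ℝ) < (n : ℝ) - 1 := by
    have : (2 : ℝ) ≤ n := by exact_mod_cast hn
    linarith
  have hset : {d : ℝ | ∃ ξ : EuclideanSpace ℝ (Fin n), ‖ξ‖ = 1 ∧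
              d = (volume ((↑) ⁻¹' (L \ K) : Set (ℝ ∙ ξ)ᗮ)).toReal}
      = {d : ℝ | ∃ ξ : EuclideanSpace ℝ (Fin n), ‖ξ‖ = 1 ∧
        d = (volume ((↑) ⁻¹' L : Set (ℝ ∙ ξ)ᗮ)).toReal
              - (volume ((↑) ⁻¹' K : Set (ℝ ∙ ξ)ᗮ)).toReal} := by
    ext d
    refine exists_congr fun ξ => and_congr_right fun _ => ?_
    have hemb : Topology.IsClosedEmbedding ((↑) : (ℝ ∙ ξ)ᗮ → EuclideanSpace ℝ (Fin n)) :=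
      (Submodule.isClosed_orthogonal _).isClosedEmbedding_subtypeVal
    have hK' : IsCompact ((↑) ⁻¹' K : Set (ℝ ∙ ξ)ᗮ) := hemb.isCompact_preimage hKcomp
    have hL' : IsCompact ((↑) ⁻¹' L : Set (ℝ ∙ ξ)ᗮ) := hemb.isCompact_preimage hLcomp
    have hsub : ((↑) ⁻¹' K : Set (ℝ ∙ ξ)ᗮ) ⊆ (↑) ⁻¹' L := Set.preimage_mono hKL
    rw [Set.preimage_sdiff, measure_sdiff hsub hK'.measurableSet.nullMeasurableSet
      hK'.measure_lt_top.ne, ENNReal.toReal_sub_of_le (measure_mono hsub) hL'.measure_lt_top.ne]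
  rw [hset, hmin.csInf_eq, measure_sdiff hKL hKcomp.measurableSet.nullMeasurableSet
      hKcomp.measure_lt_top.ne,
      ENNReal.toReal_sub_of_le (measure_mono hKL) hLcomp.measure_lt_top.ne]
  have hVpos : 0 < (volume L).toReal :=
    ENNReal.toReal_pos (Measure.measure_pos_of_mem_nhds _ (mem_interior_iff_mem_nhds.1 hL0)).ne'
      hLcomp.measure_lt_top.ne
  have hv : 0 ≤ (volume K).toReal := ENNReal.toReal_nonneg
  generalize (volume L).toReal = V at *
  generalize (volume K).toReal = v at *
  generalize cnk n 1 = c at *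
  have hb := rpow_one_add_le_one_add_mul_self (s := v / V - 1) (p := ((n : ℝ) - 1) / n)
    (by have := div_nonneg hv hVpos.le; linarith) (by positivity)
    (by rw [div_le_one hn0]; linarith)
  rw [add_sub_cancel, Real.div_rpow hv hVpos.le] at hb
  have hVp : 0 < V ^ (((n : ℝ) - 1) / n) := Real.rpow_pos_of_pos hVpos _
  have hV1 : 0 < V ^ ((1 : ℝ) / n) := Real.rpow_pos_of_pos hVpos _
  have hmul : V ^ (((n : ℝ) - 1) / n) * V ^ ((1 : ℝ) / n) = V := by
    rw [← Real.rpow_add hVpos, ← add_div, sub_add_cancel, div_self hn0.ne', Real.rpow_one]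
  generalize V ^ (((n : ℝ) - 1) / n) = A at *
  generalize V ^ ((1 : ℝ) / n) = B at *
  generalize v ^ (((n : ℝ) - 1) / n) = a at *
  rw [div_le_iff₀ hVp] at hb
  have h1 : ((n : ℝ) - 1) / n * (V - v) ≤ (A - a) * B := by
    have h2 := mul_le_mul_of_nonneg_right hb hV1.le
    have h3 : (1 + ((n : ℝ) - 1) / n * (v / V - 1)) * A * B
        = A * B - ((n : ℝ) - 1) / n * (V - v) := by
      rw [mul_assoc, hmul]
      field_simp
      ring
    rw [h3] at h2
    linarith
  have h4 : ((n : ℝ) - 1) / n * (V - v) < c * ε * B :=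
    h1.trans_lt (mul_lt_mul_of_pos_right hvol hV1)
  have h5 : V - v = (n : ℝ) / ((n : ℝ) - 1) * (((n : ℝ) - 1) / n * (V - v)) := by
    field_simp
  rw [h5]
  calc _ < (n : ℝ) / ((n : ℝ) - 1) * (c * ε * B) := mul_lt_mul_of_pos_left h4 (by positivity)
    _ = _ := by ring
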